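/- Let A ∈ ℝ^{m×n} be partitioned in blocks A = [[A11, A12],[A21, A22]] with A11 ∈ ℝ^{k×k} invertible (any row/column permutations are absorbed into the partition), and let A_k = [[A11, A12],[A21, A21·A11⁻¹·A12]] be the rank-k approximant of the partial LU factorization, so that A − A_k = [[0,0],[0,S(A11)]] with Schur complement S(A11) = A22 − A21·A11⁻¹·A12. If A11 is a local maximum volume k×k submatrix of A, then for every 1 ≤ j ≤ min(m,n) − k: σ_{k+j}(A) ≤ σ_j(A − A_k) ≤ (1 + 5k√(mn))·σ_{k+j}(A). -/

import Mathlib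

open Matrix

/-- The spectral norm (`‖·‖₂`, largest singular value) of a real matrix. -/
noncomputable def specNorm {m n : Type*} [Fintype m] [Fintype n] [DecidableEq n]
    (A : Matrix m n ℝ) : ℝ :=
  ‖LinearMap.toContinuousLinearMap (Matrix.toEuclideanLin A)‖

/-- `sval A j` is the `j`-th largest singular value of `A` (1-indexed), characterized as the
distance, in the spectral norm, from `A` to the set of matrices of rank `< j`. -/
noncomputable def sval {m n : Type*} [Fintype m] [Fintype n] [DecidableEq n]
    (A : Matrix m n ℝ) (j : ℕ) : ℝ :=
  sInf {x : ℝ | ∃ B : Matrix m n ℝ, B.rank < j ∧ x = specNorm (A - B)}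

/-- The volume of a matrix: the product of its singular values. -/
noncomputable def vol {m n : Type*} [Fintype m] [Fintype n] [DecidableEq n]
    (A : Matrix m n ℝ) : ℝ :=
  ∏ j ∈ Finset.Icc 1 (min (Fintype.card m) (Fintype.card n)), sval A j

/-- `DiffOne b r` : `r` is an injective selection of indices whose image (index set)
differs from the index set selected by `b` in at most one element. -/
def DiffOne {ι α : Type*} [Fintype ι] [DecidableEq α] (b r : ι → α) : Prop :=
  Function.Injective r ∧ (Finset.univ.image r \ Finset.univ.image b).card ≤ 1

/-!
Exchanging a row and/or a column of `A11` multiplies its determinant by an entry of `A21 * A11⁻¹`,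
by an entry of `A11⁻¹ * A12`, or by a sum
`(A21 * A11⁻¹) i p * (A11⁻¹ * A12) q j + S i j * A11⁻¹ q p`, where `S` is the Schur complement.
Local maximality bounds all of these by `1` in absolute value, hence `|S i j * A11⁻¹ q p| ≤ 2`, and
`‖S‖ * ‖A11⁻¹‖ ≤ s * t` with `s = √(2 * k * m')` and `t = √(2 * k * n')`.

Block elimination with the leading identity blocks scaled by `s` and `t` gives
`L * A * U = diag ((s * t) • A11, S)`. All singular values of `(s * t) • A11` are at least
`s * t / ‖A11⁻¹‖ ≥ ‖S‖`, so `σ_j(S) ≤ σ_{k+j}(L * A * U) ≤ ‖L‖ * ‖U‖ * σ_{k+j}(A)`, and the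
entrywise bounds control `‖L‖` and `‖U‖`. The lower bound is Weyl's inequality for the matrix `A_k`
of rank at most `k`.
-/

open Module
open scoped Matrix.Norms.L2Operator

section SingularVectors

variable {𝕜 E F : Type*} [RCLike 𝕜]
  [NormedAddCommGroup E] [InnerProductSpace 𝕜 E] [FiniteDimensional 𝕜 E]
  [NormedAddCommGroup F] [InnerProductSpace 𝕜 F] [FiniteDimensional 𝕜 F]

/-- An orthonormal basis of right singular vectors of `T`, ordered by decreasing singular value:
the eigenvector basis of `T* T`. -/
noncomputable def rightSingularBasis (T : E →ₗ[𝕜] F) :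
    OrthonormalBasis (Fin (finrank 𝕜 E)) 𝕜 E :=
  T.isSymmetric_adjoint_comp_self.eigenvectorBasis rfl

/-- The span of the right singular vectors of `T` belonging to its `j` largest singular values. -/
noncomputable def rightSingularSpan (T : E →ₗ[𝕜] F) (j : ℕ) : Submodule 𝕜 E :=
  Submodule.span 𝕜 (rightSingularBasis T '' {i | i.1 < j})

lemma norm_sq_eq_sum_singularValues (T : E →ₗ[𝕜] F) (x : E) :
    ‖T x‖ ^ 2 = ∑ i : Fin (finrank 𝕜 E),
      T.singularValues i ^ 2 * ‖(rightSingularBasis T).repr x i‖ ^ 2 := by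
  have heigen := T.isSymmetric_adjoint_comp_self.eigenvectorBasis_apply_self_apply rfl x
  rw [← RCLike.ofReal_inj (K := 𝕜), RCLike.ofReal_pow, ← inner_self_eq_norm_sq_to_K (𝕜 := 𝕜),
    ← LinearMap.adjoint_inner_right, ← (rightSingularBasis T).repr.inner_map_map, PiLp.inner_apply,
    RCLike.ofReal_sum]
  refine Finset.sum_congr rfl fun i _ => ?_
  rw [← LinearMap.comp_apply, rightSingularBasis, heigen, RCLike.inner_apply, mul_assoc,
    RCLike.mul_conj, T.sq_singularValues_fin rfl]
  push_cast
  rfl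

lemma finrank_rightSingularSpan (T : E →ₗ[𝕜] F) {j : ℕ} (hj : j ≤ finrank 𝕜 E) :
    finrank 𝕜 (rightSingularSpan T j) = j := by
  have hli := (rightSingularBasis T).orthonormal.linearIndependent
  rw [rightSingularSpan, Set.image_eq_range]
  refine (finrank_span_eq_card (hli.comp _ Subtype.val_injective)).trans ?_
  simp [Fintype.card_subtype, Fin.card_filter_val_lt, hj]

lemma finrank_rightSingularSpan_le (T : E →ₗ[𝕜] F) (j : ℕ) :
    finrank 𝕜 (rightSingularSpan T j) ≤ j := by
  rcases le_total j (finrank 𝕜 E) with hj | hj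
  · exact (finrank_rightSingularSpan T hj).le
  · exact (Submodule.finrank_le _).trans hj

lemma repr_eq_zero_of_mem_rightSingularSpan {T : E →ₗ[𝕜] F} {j : ℕ} {x : E}
    (hx : x ∈ rightSingularSpan T j) {i : Fin (finrank 𝕜 E)} (hi : j ≤ i) :
    (rightSingularBasis T).repr x i = 0 := by
  rw [rightSingularSpan, ← OrthonormalBasis.coe_toBasis, Basis.mem_span_image] at hx
  by_contra h
  exact hi.not_gt (hx (Finsupp.mem_support_iff.2 h))

lemma repr_eq_zero_of_mem_orthogonal_rightSingularSpan {T : E →ₗ[𝕜] F} {j : ℕ} {x : E}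
    (hx : x ∈ (rightSingularSpan T j)ᗮ) {i : Fin (finrank 𝕜 E)} (hi : i < j) :
    (rightSingularBasis T).repr x i = 0 := by
  rw [OrthonormalBasis.repr_apply_apply]
  exact hx _ (Submodule.subset_span (Set.mem_image_of_mem _ hi))

lemma singularValues_mul_norm_le_of_mem_rightSingularSpan {T : E →ₗ[𝕜] F} {j : ℕ} {x : E}
    (hx : x ∈ rightSingularSpan T (j + 1)) : T.singularValues j * ‖x‖ ≤ ‖T x‖ := by
  refine le_of_sq_le_sq ?_ (norm_nonneg _)
  rw [norm_sq_eq_sum_singularValues, mul_pow, ← (rightSingularBasis T).repr.norm_map,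
    EuclideanSpace.norm_sq_eq, Finset.mul_sum]
  gcongr ∑ i, ?_ with i
  rcases le_or_gt (j + 1) i with hi | hi
  · simp [repr_eq_zero_of_mem_rightSingularSpan hx hi]
  · have := T.singularValues_antitone (Nat.le_of_lt_succ hi)
    have := T.singularValues_nonneg j
    gcongr

lemma norm_le_singularValues_mul_of_mem_orthogonal {T : E →ₗ[𝕜] F} {j : ℕ} {x : E}
    (hx : x ∈ (rightSingularSpan T j)ᗮ) : ‖T x‖ ≤ T.singularValues j * ‖x‖ := by
  have hσ := T.singularValues_nonneg j
  refine le_of_sq_le_sq ?_ (by positivity)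
  rw [norm_sq_eq_sum_singularValues, mul_pow, ← (rightSingularBasis T).repr.norm_map x,
    EuclideanSpace.norm_sq_eq, Finset.mul_sum]
  refine Finset.sum_le_sum fun i _ => ?_
  rcases lt_or_ge i.1 j with hi | hi
  · simp [repr_eq_zero_of_mem_orthogonal_rightSingularSpan hx hi]
  · have := T.singularValues_antitone hi
    have := T.singularValues_nonneg i
    gcongr

lemma exists_finrank_range_le_forall_norm_sub_le (T : E →ₗ[𝕜] F) (j : ℕ) :
    ∃ R : E →ₗ[𝕜] F, finrank 𝕜 R.range ≤ j ∧ ∀ x, ‖(T - R) x‖ ≤ T.singularValues j * ‖x‖ := by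
  set K := rightSingularSpan T j
  refine ⟨T ∘ₗ K.starProjection.toLinearMap, ?_, fun x => ?_⟩
  · rw [LinearMap.range_comp, Submodule.range_starProjection]
    exact (Submodule.finrank_map_le _ _).trans (finrank_rightSingularSpan_le T j)
  · calc ‖(T - T ∘ₗ K.starProjection.toLinearMap) x‖ = ‖T (x - K.starProjection x)‖ := by simp
      _ ≤ T.singularValues j * ‖x - K.starProjection x‖ :=
        norm_le_singularValues_mul_of_mem_orthogonal (K.sub_starProjection_mem_orthogonal x)
      _ ≤ T.singularValues j * ‖x‖ := by
        have := T.singularValues_nonneg j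
        gcongr
        rw [← K.starProjection_orthogonal_val]
        exact Submodule.norm_starProjection_apply_le Kᗮ x

end SingularVectors

lemma rank_add_le {m n K : Type*} [Fintype n] [Field K] (A B : Matrix m n K) :
    (A + B).rank ≤ A.rank + B.rank := by
  rw [Matrix.rank, mulVecLin_add]
  exact (Submodule.finrank_mono (LinearMap.range_add_le _ _)).trans
    (Submodule.finrank_add_le_finrank_add_finrank _ _)

lemma rank_eq_finrank_range_toEuclideanLin {m n : Type*} [Finite m] [Fintype n] [DecidableEq n]
    (A : Matrix m n ℝ) : A.rank = finrank ℝ (toEuclideanLin A).range := by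
  classical
  have := Fintype.ofFinite m
  rw [toEuclideanLin_eq_toLin_orthonormal]
  exact rank_eq_finrank_range_toLin A _ _

section SingularValues

variable {m n : Type*} [Fintype m] [Fintype n] [DecidableEq n]

lemma specNorm_eq_norm (A : Matrix m n ℝ) : specNorm A = ‖A‖ := rfl

lemma sval_nonneg (A : Matrix m n ℝ) (j : ℕ) : 0 ≤ sval A j :=
  Real.sInf_nonneg (by rintro _ ⟨B, _, rfl⟩; rw [specNorm_eq_norm]; positivity)

lemma sval_le_norm_sub (A : Matrix m n ℝ) {B : Matrix m n ℝ} {j : ℕ} (hB : B.rank < j) :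
    sval A j ≤ ‖A - B‖ :=
  csInf_le ⟨0, by rintro _ ⟨C, _, rfl⟩; rw [specNorm_eq_norm]; positivity⟩ ⟨B, hB, rfl⟩

lemma le_sval {A : Matrix m n ℝ} {j : ℕ} (hj : 0 < j) {c : ℝ}
    (h : ∀ B : Matrix m n ℝ, B.rank < j → c ≤ ‖A - B‖) : c ≤ sval A j :=
  le_csInf ⟨_, 0, by rwa [rank_zero], rfl⟩ (by rintro _ ⟨B, hB, rfl⟩; exact h B hB)

lemma norm_toEuclideanLin_le (A : Matrix m n ℝ) (x : EuclideanSpace ℝ n) :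
    ‖toEuclideanLin A x‖ ≤ ‖A‖ * ‖x‖ :=
  l2_opNorm_mulVec A x

lemma norm_le_of_forall_norm_toEuclideanLin_le {A : Matrix m n ℝ} {c : ℝ} (hc : 0 ≤ c)
    (h : ∀ x, ‖toEuclideanLin A x‖ ≤ c * ‖x‖) : ‖A‖ ≤ c :=
  ContinuousLinearMap.opNorm_le_bound _ hc h

lemma le_sval_of_forall_mul_norm_le {V : Type*} [AddCommGroup V] [Module ℝ V]
    [FiniteDimensional ℝ V] {A : Matrix m n ℝ} {f : V →ₗ[ℝ] EuclideanSpace ℝ n}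
    (hf : Function.Injective f) {j : ℕ} (hj : 0 < j) (hjV : j ≤ finrank ℝ V) {c : ℝ}
    (h : ∀ v, c * ‖f v‖ ≤ ‖toEuclideanLin A (f v)‖) : c ≤ sval A j := by
  refine le_sval hj fun B hB => ?_
  have hrank : finrank ℝ (toEuclideanLin B).range < finrank ℝ V := by
    rw [← rank_eq_finrank_range_toEuclideanLin]
    exact hB.trans_le hjV
  obtain ⟨v, hv, hv0⟩ := Submodule.exists_mem_ne_zero_of_ne_bot
    (LinearMap.ker_ne_bot_of_finrank_lt (f := (toEuclideanLin B).rangeRestrict ∘ₗ f) hrank)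
  have hBv : toEuclideanLin B (f v) = 0 := congrArg Subtype.val hv
  have hfv : 0 < ‖f v‖ := norm_pos_iff.2 ((map_ne_zero_iff f hf).2 hv0)
  refine le_of_mul_le_mul_right ?_ hfv
  calc c * ‖f v‖ ≤ ‖toEuclideanLin A (f v)‖ := h v
    _ = ‖toEuclideanLin (A - B) (f v)‖ := by rw [map_sub, LinearMap.sub_apply, hBv, sub_zero]
    _ ≤ ‖A - B‖ * ‖f v‖ := norm_toEuclideanLin_le _ _

lemma exists_rank_le_norm_sub_le_singularValues (A : Matrix m n ℝ) (j : ℕ) :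
    ∃ B : Matrix m n ℝ, B.rank ≤ j ∧ ‖A - B‖ ≤ (toEuclideanLin A).singularValues j := by
  obtain ⟨R, hR, hAR⟩ := exists_finrank_range_le_forall_norm_sub_le (toEuclideanLin A) j
  obtain ⟨B, rfl⟩ := toEuclideanLin.surjective R
  refine ⟨B, (rank_eq_finrank_range_toEuclideanLin B).trans_le hR,
    norm_le_of_forall_norm_toEuclideanLin_le ((toEuclideanLin A).singularValues_nonneg j) ?_⟩
  simpa only [map_sub] using hAR

lemma sval_add_one (A : Matrix m n ℝ) (j : ℕ) :
    sval A (j + 1) = (toEuclideanLin A).singularValues j := by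
  refine le_antisymm ?_ ?_
  · obtain ⟨B, hB, hAB⟩ := exists_rank_le_norm_sub_le_singularValues A j
    exact (sval_le_norm_sub A (Nat.lt_succ_of_le hB)).trans hAB
  · rcases lt_or_ge j (finrank ℝ (EuclideanSpace ℝ n)) with hj | hj
    · exact le_sval_of_forall_mul_norm_le (Submodule.subtype_injective _) j.succ_pos
        (finrank_rightSingularSpan _ hj).ge
        fun v => singularValues_mul_norm_le_of_mem_rightSingularSpan v.2
    · rw [(toEuclideanLin A).singularValues_of_finrank_le hj]
      exact sval_nonneg A _

lemma exists_rank_lt_norm_sub_eq_sval (A : Matrix m n ℝ) {j : ℕ} (hj : 0 < j) :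
    ∃ B : Matrix m n ℝ, B.rank < j ∧ ‖A - B‖ = sval A j := by
  obtain ⟨i, rfl⟩ := Nat.exists_eq_add_one.2 hj
  obtain ⟨B, hB, hAB⟩ := exists_rank_le_norm_sub_le_singularValues A i
  rw [← sval_add_one] at hAB
  have hB := Nat.lt_succ_of_le hB
  exact ⟨B, hB, hAB.antisymm (sval_le_norm_sub A hB)⟩

lemma sval_le_norm (A : Matrix m n ℝ) {j : ℕ} (hj : 0 < j) : sval A j ≤ ‖A‖ := by
  simpa only [sub_zero] using sval_le_norm_sub A (B := 0) (rank_zero.trans_lt hj)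

lemma vol_eq_abs_det (A : Matrix n n ℝ) : vol A = |A.det| := by
  rw [vol, min_self, ← LinearMap.det_toLpLin 2 A, ← LinearMap.normDet_eq_abs_det,
    LinearMap.normDet_eq_prod_singularValues, finrank_euclideanSpace,
    ← Finset.Ico_add_one_right_eq_Icc, Finset.prod_Ico_eq_prod_range, Nat.add_sub_cancel]
  exact Finset.prod_congr rfl fun i _ => by rw [add_comm, sval_add_one]

lemma sval_mul_mul_le {m' n' : Type*} [Fintype m'] [Fintype n'] [DecidableEq n'] [DecidableEq m]
    (X : Matrix m' m ℝ) (A : Matrix m n ℝ) (Y : Matrix n n' ℝ) {j : ℕ} (hj : 0 < j) :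
    sval (X * A * Y) j ≤ ‖X‖ * sval A j * ‖Y‖ := by
  obtain ⟨B, hB, hAB⟩ := exists_rank_lt_norm_sub_eq_sval A hj
  have hrank : (X * B * Y).rank < j :=
    ((rank_mul_le_left _ _).trans (rank_mul_le_right _ _)).trans_lt hB
  calc sval (X * A * Y) j ≤ ‖X * A * Y - X * B * Y‖ := sval_le_norm_sub _ hrank
    _ = ‖X * (A - B) * Y‖ := by rw [Matrix.mul_sub, Matrix.sub_mul]
    _ ≤ ‖X * (A - B)‖ * ‖Y‖ := l2_opNorm_mul _ _
    _ ≤ ‖X‖ * ‖A - B‖ * ‖Y‖ := by gcongr; exact l2_opNorm_mul _ _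
    _ = ‖X‖ * sval A j * ‖Y‖ := by rw [hAB]

lemma sval_add_le_sval_sub (A : Matrix m n ℝ) {K : Matrix m n ℝ} {k : ℕ} (hK : K.rank ≤ k)
    {j : ℕ} (hj : 0 < j) : sval A (k + j) ≤ sval (A - K) j := by
  refine le_sval hj fun B hB => ?_
  have hrank : (K + B).rank < k + j := (rank_add_le K B).trans_lt (Nat.add_lt_add_of_le_of_lt hK hB)
  simpa only [sub_sub] using sval_le_norm_sub A hrank

end SingularValues

section NormBounds

variable {m n p q : Type*} [Fintype m] [Fintype n] [DecidableEq n] [Fintype p] [Fintype q]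
  [DecidableEq q]

lemma l2_opNorm_sq_le_sum_sq (A : Matrix m n ℝ) : ‖A‖ ^ 2 ≤ ∑ i, ∑ j, A i j ^ 2 := by
  have hsum : 0 ≤ ∑ i, ∑ j, A i j ^ 2 := by positivity
  refine (Real.le_sqrt (norm_nonneg A) hsum).1 ?_
  refine norm_le_of_forall_norm_toEuclideanLin_le (Real.sqrt_nonneg _) fun x => ?_
  refine le_of_sq_le_sq ?_ (by positivity)
  rw [mul_pow, Real.sq_sqrt hsum, EuclideanSpace.real_norm_sq_eq, EuclideanSpace.real_norm_sq_eq,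
    Finset.sum_mul]
  gcongr ∑ i, ?_ with i
  exact Finset.sum_mul_sq_le_sq_mul_sq _ _ _

lemma l2_opNorm_sq_le_of_abs_le {A : Matrix m n ℝ} {c : ℝ} (h : ∀ i j, |A i j| ≤ c) :
    ‖A‖ ^ 2 ≤ Fintype.card m * Fintype.card n * c ^ 2 :=
  calc ‖A‖ ^ 2 ≤ ∑ i, ∑ j, A i j ^ 2 := l2_opNorm_sq_le_sum_sq A
    _ ≤ ∑ _i : m, ∑ _j : n, c ^ 2 := by
      gcongr ∑ i, ∑ j, ?_ with i _ j
      exact sq_le_sq' (neg_le_of_abs_le (h i j)) (le_of_abs_le (h i j))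
    _ = Fintype.card m * Fintype.card n * c ^ 2 := by simp [mul_assoc]

lemma l2_opNorm_mul_l2_opNorm_sq_le_of_abs_mul_le {A : Matrix m n ℝ} {B : Matrix p q ℝ} {c : ℝ}
    (h : ∀ i j k l, |A i j * B k l| ≤ c) :
    (‖A‖ * ‖B‖) ^ 2 ≤
      Fintype.card m * Fintype.card n * (Fintype.card p * Fintype.card q) * c ^ 2 :=
  calc (‖A‖ * ‖B‖) ^ 2 ≤ (∑ i, ∑ j, A i j ^ 2) * ∑ k, ∑ l, B k l ^ 2 := by
        rw [mul_pow]
        gcongr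
        exacts [l2_opNorm_sq_le_sum_sq A, l2_opNorm_sq_le_sum_sq B]
    _ = ∑ i, ∑ j, ∑ k, ∑ l, (A i j * B k l) ^ 2 := by
        simp_rw [Finset.sum_mul, Finset.mul_sum, mul_pow]
    _ ≤ ∑ _i : m, ∑ _j : n, ∑ _k : p, ∑ _l : q, c ^ 2 := by
        gcongr ∑ i, ∑ j, ∑ k, ∑ l, ?_ with i _ j _ k _ l
        exact sq_le_sq' (neg_le_of_abs_le (h i j k l)) (le_of_abs_le (h i j k l))
    _ = Fintype.card m * Fintype.card n * (Fintype.card p * Fintype.card q) * c ^ 2 := by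
        simp [mul_assoc]

lemma l2_opNorm_one_le_one : ‖(1 : Matrix n n ℝ)‖ ≤ 1 :=
  norm_le_of_forall_norm_toEuclideanLin_le zero_le_one fun x => by simp

lemma l2_opNorm_smul_one_sq_le (s : ℝ) : ‖s • (1 : Matrix n n ℝ)‖ ^ 2 ≤ s ^ 2 :=
  calc ‖s • (1 : Matrix n n ℝ)‖ ^ 2 = s ^ 2 * ‖(1 : Matrix n n ℝ)‖ ^ 2 := by
        rw [norm_smul, mul_pow, Real.norm_eq_abs, sq_abs]
    _ ≤ s ^ 2 * 1 ^ 2 := by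
        gcongr
        exact l2_opNorm_one_le_one
    _ = s ^ 2 := by ring

lemma l2_opNorm_le_one_of_conjTranspose_mul_self {A : Matrix m n ℝ} (h : Aᴴ * A = 1) :
    ‖A‖ ≤ 1 := by
  have hA : ‖A‖ * ‖A‖ ≤ 1 := by
    rw [← l2_opNorm_conjTranspose_mul_self, h]
    exact l2_opNorm_one_le_one
  exact abs_le_one_iff_mul_self_le_one.2 hA |>.trans' (le_abs_self _)

lemma norm_le_norm_inv_mul {A : Matrix n n ℝ} (hA : IsUnit A.det) (x : EuclideanSpace ℝ n) :
    ‖x‖ ≤ ‖A⁻¹‖ * ‖toEuclideanLin A x‖ := by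
  have hx : toEuclideanLin A⁻¹ (toEuclideanLin A x) = x := by
    simp [toLpLin_apply, mulVec_mulVec, nonsing_inv_mul _ hA]
  simpa only [hx] using norm_toEuclideanLin_le A⁻¹ (toEuclideanLin A x)

end NormBounds

section Blocks

variable {m₁ m₂ n₁ n₂ : Type*} [Fintype m₁] [Fintype m₂] [Fintype n₁] [Fintype n₂]
  [DecidableEq n₁] [DecidableEq n₂]

lemma ofLp_sumEquivProd_symm {ι κ : Type*} [Fintype ι] [Fintype κ] (x : EuclideanSpace ℝ ι)
    (y : EuclideanSpace ℝ κ) :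
    (EuclideanSpace.sumEquivProd.symm (x, y)).ofLp = Sum.elim x.ofLp y.ofLp := by
  ext (i | i) <;> rfl

lemma norm_sumEquivProd_symm_sq {ι κ : Type*} [Fintype ι] [Fintype κ] (x : EuclideanSpace ℝ ι)
    (y : EuclideanSpace ℝ κ) :
    ‖EuclideanSpace.sumEquivProd.symm (x, y)‖ ^ 2 = ‖x‖ ^ 2 + ‖y‖ ^ 2 := by
  simp only [EuclideanSpace.real_norm_sq_eq, ofLp_sumEquivProd_symm, Fintype.sum_sum_type,
    Sum.elim_inl, Sum.elim_inr]

lemma toEuclideanLin_fromBlocks (A : Matrix m₁ n₁ ℝ) (B : Matrix m₁ n₂ ℝ) (C : Matrix m₂ n₁ ℝ)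
    (D : Matrix m₂ n₂ ℝ) (x : EuclideanSpace ℝ n₁) (y : EuclideanSpace ℝ n₂) :
    toEuclideanLin (fromBlocks A B C D) (EuclideanSpace.sumEquivProd.symm (x, y)) =
      EuclideanSpace.sumEquivProd.symm
        (toEuclideanLin A x + toEuclideanLin B y, toEuclideanLin C x + toEuclideanLin D y) := by
  apply WithLp.ofLp_injective
  simp only [ofLp_sumEquivProd_symm, toLpLin_apply, fromBlocks_mulVec, Sum.elim_comp_inl,
    Sum.elim_comp_inr, WithLp.ofLp_add]

lemma norm_toEuclideanLin_add_sq_le (A : Matrix m₁ n₁ ℝ) (B : Matrix m₁ n₂ ℝ)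
    (x : EuclideanSpace ℝ n₁) (y : EuclideanSpace ℝ n₂) :
    ‖toEuclideanLin A x + toEuclideanLin B y‖ ^ 2 ≤
      (‖A‖ ^ 2 + ‖B‖ ^ 2) * (‖x‖ ^ 2 + ‖y‖ ^ 2) :=
  calc ‖toEuclideanLin A x + toEuclideanLin B y‖ ^ 2
      ≤ (‖A‖ * ‖x‖ + ‖B‖ * ‖y‖) ^ 2 := by
        gcongr
        exact norm_add_le_of_le (norm_toEuclideanLin_le A x) (norm_toEuclideanLin_le B y)
    _ ≤ (‖A‖ ^ 2 + ‖B‖ ^ 2) * (‖x‖ ^ 2 + ‖y‖ ^ 2) := by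
        linarith [sq_nonneg (‖A‖ * ‖y‖ - ‖B‖ * ‖x‖)]

lemma l2_opNorm_fromBlocks_le (A : Matrix m₁ n₁ ℝ) (B : Matrix m₁ n₂ ℝ) (C : Matrix m₂ n₁ ℝ)
    (D : Matrix m₂ n₂ ℝ) :
    ‖fromBlocks A B C D‖ ≤ √(‖A‖ ^ 2 + ‖B‖ ^ 2 + ‖C‖ ^ 2 + ‖D‖ ^ 2) := by
  refine norm_le_of_forall_norm_toEuclideanLin_le (Real.sqrt_nonneg _) fun z => ?_
  obtain ⟨⟨x, y⟩, rfl⟩ := EuclideanSpace.sumEquivProd.symm.surjective z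
  refine le_of_sq_le_sq ?_ (by positivity)
  rw [toEuclideanLin_fromBlocks, norm_sumEquivProd_symm_sq, mul_pow, norm_sumEquivProd_symm_sq,
    Real.sq_sqrt (by positivity)]
  linarith [norm_toEuclideanLin_add_sq_le A B x y, norm_toEuclideanLin_add_sq_le C D x y]

lemma sval_fromBlocks_zero_le (S : Matrix m₂ n₂ ℝ) {j : ℕ} (hj : 0 < j) :
    sval (fromBlocks (0 : Matrix m₁ n₁ ℝ) 0 0 S) j ≤ sval S j := by
  classical
  set X : Matrix (m₁ ⊕ m₂) m₂ ℝ := fromRows 0 1 with hX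
  set Y : Matrix n₂ (n₁ ⊕ n₂) ℝ := fromCols 0 1 with hY
  have hXn : ‖X‖ ≤ 1 := l2_opNorm_le_one_of_conjTranspose_mul_self <| by
    rw [hX, conjTranspose_fromRows_eq_fromCols_conjTranspose, fromCols_mul_fromRows]
    simp
  have hYn : ‖Y‖ ≤ 1 := by
    rw [← l2_opNorm_conjTranspose]
    refine l2_opNorm_le_one_of_conjTranspose_mul_self ?_
    rw [hY, conjTranspose_conjTranspose, conjTranspose_fromCols_eq_fromRows_conjTranspose,
      fromCols_mul_fromRows]
    simp
  calc sval (fromBlocks (0 : Matrix m₁ n₁ ℝ) 0 0 S) j = sval (X * S * Y) j := by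
        rw [hX, hY, fromRows_mul, fromRows_mul_fromCols]
        simp
    _ ≤ ‖X‖ * sval S j * ‖Y‖ := sval_mul_mul_le X S Y hj
    _ ≤ 1 * sval S j * 1 := by
        have := sval_nonneg S j
        gcongr
    _ = sval S j := by ring

lemma sval_le_sval_fromBlocks_diagonal {T : Matrix m₁ n₁ ℝ} {S : Matrix m₂ n₂ ℝ} {j : ℕ}
    (hj : 0 < j) (hT : ∀ x, sval S j * ‖x‖ ≤ ‖toEuclideanLin T x‖) :
    sval S j ≤ sval (fromBlocks T 0 0 S) (Fintype.card n₁ + j) := by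
  obtain ⟨i, rfl⟩ := Nat.exists_eq_add_one.2 hj
  rcases le_or_gt (finrank ℝ (EuclideanSpace ℝ n₂)) i with hi | hi
  · calc sval S (i + 1) = 0 := by
          rw [sval_add_one, LinearMap.singularValues_of_finrank_le _ hi]
      _ ≤ sval (fromBlocks T 0 0 S) (Fintype.card n₁ + (i + 1)) := sval_nonneg _ _
  set W := rightSingularSpan (toEuclideanLin S) (i + 1)
  let f : EuclideanSpace ℝ n₁ × W →ₗ[ℝ] EuclideanSpace ℝ (n₁ ⊕ n₂) :=
    EuclideanSpace.sumEquivProd.symm.toLinearEquiv.toLinearMap ∘ₗ LinearMap.id.prodMap W.subtype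
  have hf : Function.Injective f := EuclideanSpace.sumEquivProd.symm.injective.comp
    (Function.injective_id.prodMap W.subtype_injective)
  refine le_sval_of_forall_mul_norm_le hf (by positivity) ?_ ?_
  · rw [finrank_prod, finrank_euclideanSpace, finrank_rightSingularSpan _ hi]
  rintro ⟨x, y⟩
  have hfxy : f (x, y) = EuclideanSpace.sumEquivProd.symm (x, (y : EuclideanSpace ℝ n₂)) := rfl
  have hSy : sval S (i + 1) * ‖(y : EuclideanSpace ℝ n₂)‖ ≤ ‖toEuclideanLin S y‖ := by
    rw [sval_add_one]
    exact singularValues_mul_norm_le_of_mem_rightSingularSpan y.2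
  have hσ := sval_nonneg S (i + 1)
  refine le_of_sq_le_sq ?_ (norm_nonneg _)
  rw [hfxy, toEuclideanLin_fromBlocks, norm_sumEquivProd_symm_sq, mul_pow,
    norm_sumEquivProd_symm_sq, mul_add, ← mul_pow, ← mul_pow]
  simp only [map_zero, LinearMap.zero_apply, add_zero, zero_add]
  gcongr
  exact hT x

end Blocks

section Exchange

variable {κ μ ν R : Type*} [DecidableEq κ]

/-- The selection `κ → κ ⊕ μ` of the indices of the leading block, with `p` exchanged for the
index `i` outside that block. -/
def exchange (p : κ) (i : μ) : κ → κ ⊕ μ :=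
  Function.update Sum.inl p (Sum.inr i)

lemma diffOne_inl [Fintype κ] [DecidableEq μ] : DiffOne (Sum.inl : κ → κ ⊕ μ) Sum.inl :=
  ⟨Sum.inl_injective, by simp⟩

lemma diffOne_inl_exchange [Fintype κ] [DecidableEq μ] (p : κ) (i : μ) :
    DiffOne Sum.inl (exchange p i) := by
  refine ⟨fun a b hab => ?_, ?_⟩
  · by_cases ha : a = p <;> by_cases hb : b = p <;> simp_all [exchange, Function.update]
  · have hsub : Finset.univ.image (exchange p i) \ Finset.univ.image Sum.inl ⊆ {Sum.inr i} := by
      simp only [Finset.subset_iff, Finset.mem_sdiff, Finset.mem_image, Finset.mem_univ, true_and,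
        Finset.mem_singleton]
      rintro _ ⟨⟨a, rfl⟩, ha⟩
      obtain rfl | hap := eq_or_ne a p
      · simp [exchange]
      · exact (ha ⟨a, by simp [exchange, hap]⟩).elim
    exact Finset.card_le_card hsub

variable (A : Matrix κ κ R) (B : Matrix κ ν R) (C : Matrix μ κ R) (D : Matrix μ ν R)

lemma submatrix_exchange_inl (p : κ) (i : μ) :
    (fromBlocks A B C D).submatrix (exchange p i) Sum.inl = A.updateRow p (C i) := by
  ext a b
  obtain rfl | ha := eq_or_ne a p <;> simp [exchange, *]

lemma submatrix_inl_exchange (q : κ) (j : ν) :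
    (fromBlocks A B C D).submatrix Sum.inl (exchange q j) = A.updateCol q (B.col j) := by
  ext a b
  obtain rfl | hb := eq_or_ne b q <;> simp [exchange, *]

lemma submatrix_exchange_exchange (p q : κ) (i : μ) (j : ν) :
    (fromBlocks A B C D).submatrix (exchange p i) (exchange q j) =
      (A.updateCol q (B.col j)).updateRow p (Function.update (C i) q (D i j)) := by
  ext a b
  obtain rfl | ha := eq_or_ne a p <;> obtain rfl | hb := eq_or_ne b q <;> simp [exchange, *]

end Exchange

section ExchangeDeterminants

variable {κ μ ν R : Type*} [Fintype κ] [DecidableEq κ] [CommRing R]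

lemma det_updateRow_vecMul (A : Matrix κ κ R) (p : κ) (v : κ → R) :
    (A.updateRow p (v ᵥ* A)).det = v p * A.det := by
  rw [vecMul_eq_sum, det_updateRow_sum, smul_eq_mul]

lemma det_updateCol_mulVec (A : Matrix κ κ R) (q : κ) (v : κ → R) :
    (A.updateCol q (A *ᵥ v)).det = v q * A.det := by
  rw [← det_transpose, ← updateRow_transpose, ← vecMul_transpose, det_updateRow_vecMul,
    det_transpose]

lemma adjugate_eq_det_updateCol_single (A : Matrix κ κ R) (q p : κ) :
    A.adjugate q p = (A.updateCol q (Pi.single p 1)).det := by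
  rw [← cramer_apply, cramer_eq_adjugate_mulVec, mulVec_single_one, col_apply]

lemma adjugate_updateCol_self_apply (A : Matrix κ κ R) (q p : κ) (w : κ → R) :
    (A.updateCol q w).adjugate q p = A.adjugate q p := by
  simp only [adjugate_eq_det_updateCol_single, updateCol_idem]

lemma det_updateRow_vecMul_add_smul_single (A : Matrix κ κ R) (p q : κ) (v : κ → R) (s : R) :
    (A.updateRow p (v ᵥ* A + s • Pi.single q 1)).det = v p * A.det + s * A.adjugate q p := by
  rw [det_updateRow_add, det_updateRow_vecMul, det_updateRow_smul, adjugate_apply]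

/-- The Schur complement of the block `A` in `fromBlocks A B C D`, with the junk value `D` when `A`
is not invertible. -/
noncomputable def schurComplement (A : Matrix κ κ R) (B : Matrix κ ν R) (C : Matrix μ κ R)
    (D : Matrix μ ν R) : Matrix μ ν R :=
  D - C * A⁻¹ * B

variable {A : Matrix κ κ R} (B : Matrix κ ν R) (C : Matrix μ κ R) (D : Matrix μ ν R)

lemma vecMul_mul_inv_row (hA : IsUnit A.det) (i : μ) : (C * A⁻¹) i ᵥ* A = C i := by
  rw [← mul_apply_eq_vecMul, nonsing_inv_mul_cancel_right _ _ hA]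

lemma mulVec_inv_mul_col (hA : IsUnit A.det) (j : ν) : A *ᵥ (A⁻¹ * B).col j = B.col j := by
  ext i
  exact congrFun (congrFun (mul_nonsing_inv_cancel_left _ B hA) i) j

lemma det_submatrix_exchange_inl (hA : IsUnit A.det) (p : κ) (i : μ) :
    ((fromBlocks A B C D).submatrix (exchange p i) Sum.inl).det = (C * A⁻¹) i p * A.det := by
  rw [submatrix_exchange_inl, ← vecMul_mul_inv_row C hA, det_updateRow_vecMul]

lemma det_submatrix_inl_exchange (hA : IsUnit A.det) (q : κ) (j : ν) :
    ((fromBlocks A B C D).submatrix Sum.inl (exchange q j)).det = (A⁻¹ * B) q j * A.det := by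
  rw [submatrix_inl_exchange, ← mulVec_inv_mul_col B hA, det_updateCol_mulVec, col_apply]

lemma update_row_eq_vecMul_add_smul_single (hA : IsUnit A.det) (q : κ) (i : μ) (j : ν) :
    Function.update (C i) q (D i j) =
      (C * A⁻¹) i ᵥ* A.updateCol q (B.col j) +
        schurComplement A B C D i j • Pi.single q 1 := by
  ext r
  obtain rfl | hr := eq_or_ne r q
  · simp [schurComplement, vecMul, Matrix.mul_apply, dotProduct]
  · have := congrFun (vecMul_mul_inv_row C hA i) r
    simpa [vecMul, dotProduct, hr] using this.symm

lemma det_submatrix_exchange_exchange (hA : IsUnit A.det) (p q : κ) (i : μ) (j : ν) :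
    ((fromBlocks A B C D).submatrix (exchange p i) (exchange q j)).det =
      ((C * A⁻¹) i p * (A⁻¹ * B) q j + schurComplement A B C D i j * A⁻¹ q p) * A.det := by
  have hadj : A.adjugate q p = A⁻¹ q p * A.det := by
    rw [inv_def, Matrix.smul_apply, smul_eq_mul, mul_right_comm, Ring.inverse_mul_cancel _ hA,
      one_mul]
  rw [submatrix_exchange_exchange, update_row_eq_vecMul_add_smul_single B C D hA,
    det_updateRow_vecMul_add_smul_single, adjugate_updateCol_self_apply, hadj,
    ← submatrix_inl_exchange A B C D, det_submatrix_inl_exchange B C D hA]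
  ring

end ExchangeDeterminants

section LocalMaxVol

/-- The submatrix of `A` selected by the rows `r₀` and the columns `c₀` is a local maximum volume
submatrix of `A`. The competitors are indexed by selections `r` and `c` rather than by index sets;
`DiffOne` makes these injective, and reordering a selection does not change the volume. -/
def IsLocalMaxVol {κ m n : Type*} [Fintype κ] [DecidableEq κ] [DecidableEq m] [DecidableEq n]
    (A : Matrix m n ℝ) (r₀ : κ → m) (c₀ : κ → n) : Prop :=
  0 < vol (A.submatrix r₀ c₀) ∧ ∀ (r : κ → m) (c : κ → n), DiffOne r₀ r → DiffOne c₀ c →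
    vol (A.submatrix r c) ≤ vol (A.submatrix r₀ c₀)

variable {κ μ ν : Type*} [Fintype κ] [DecidableEq κ] [DecidableEq μ] [DecidableEq ν]

variable {A : Matrix κ κ ℝ} {B : Matrix κ ν ℝ} {C : Matrix μ κ ℝ} {D : Matrix μ ν ℝ}

namespace IsLocalMaxVol

lemma isUnit_det (h : IsLocalMaxVol (fromBlocks A B C D) Sum.inl Sum.inl) : IsUnit A.det := by
  have hvol : 0 < vol A := h.1
  rw [vol_eq_abs_det, abs_pos] at hvol
  exact hvol.isUnit

lemma abs_le_of_det_eq (h : IsLocalMaxVol (fromBlocks A B C D) Sum.inl Sum.inl)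
    {r : κ → κ ⊕ μ} {c : κ → κ ⊕ ν} (hr : DiffOne Sum.inl r) (hc : DiffOne Sum.inl c) {t : ℝ}
    (ht : ((fromBlocks A B C D).submatrix r c).det = t * A.det) : |t| ≤ 1 := by
  have hvol : vol ((fromBlocks A B C D).submatrix r c) ≤ vol A := h.2 r c hr hc
  rw [vol_eq_abs_det, vol_eq_abs_det, ht, abs_mul] at hvol
  exact (mul_le_iff_le_one_left (abs_pos.2 h.isUnit_det.ne_zero)).1 hvol

lemma abs_mul_inv_le (h : IsLocalMaxVol (fromBlocks A B C D) Sum.inl Sum.inl) (i : μ) (p : κ) :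
    |(C * A⁻¹) i p| ≤ 1 :=
  h.abs_le_of_det_eq (diffOne_inl_exchange p i) diffOne_inl
    (det_submatrix_exchange_inl B C D h.isUnit_det p i)

lemma abs_inv_mul_le (h : IsLocalMaxVol (fromBlocks A B C D) Sum.inl Sum.inl) (q : κ) (j : ν) :
    |(A⁻¹ * B) q j| ≤ 1 :=
  h.abs_le_of_det_eq diffOne_inl (diffOne_inl_exchange q j)
    (det_submatrix_inl_exchange B C D h.isUnit_det q j)

lemma abs_schurComplement_mul_inv_le (h : IsLocalMaxVol (fromBlocks A B C D) Sum.inl Sum.inl)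
    (i : μ) (j : ν) (q p : κ) : |schurComplement A B C D i j * A⁻¹ q p| ≤ 2 := by
  set s := schurComplement A B C D i j * A⁻¹ q p
  set t := (C * A⁻¹) i p * (A⁻¹ * B) q j
  have hsum : |t + s| ≤ 1 :=
    h.abs_le_of_det_eq (diffOne_inl_exchange p i) (diffOne_inl_exchange q j)
      (det_submatrix_exchange_exchange B C D h.isUnit_det p q i j)
  have ht : |t| ≤ 1 := by
    rw [abs_mul]
    exact mul_le_one₀ (h.abs_mul_inv_le i p) (abs_nonneg _) (h.abs_inv_mul_le q j)
  calc |s| = |(t + s) - t| := by rw [add_sub_cancel_left]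
    _ ≤ |t + s| + |t| := abs_sub _ _
    _ ≤ 2 := by linarith

lemma norm_mul_inv_sq_le [Fintype μ]
    (h : IsLocalMaxVol (fromBlocks A B C D) Sum.inl Sum.inl) :
    ‖C * A⁻¹‖ ^ 2 ≤ Fintype.card κ * Fintype.card μ := by
  simpa [mul_comm] using l2_opNorm_sq_le_of_abs_le h.abs_mul_inv_le

lemma norm_inv_mul_sq_le [Fintype ν]
    (h : IsLocalMaxVol (fromBlocks A B C D) Sum.inl Sum.inl) :
    ‖A⁻¹ * B‖ ^ 2 ≤ Fintype.card κ * Fintype.card ν := by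
  simpa using l2_opNorm_sq_le_of_abs_le h.abs_inv_mul_le

lemma norm_schurComplement_mul_norm_inv_le [Fintype μ] [Fintype ν]
    (h : IsLocalMaxVol (fromBlocks A B C D) Sum.inl Sum.inl) :
    ‖schurComplement A B C D‖ * ‖A⁻¹‖ ≤
      √(2 * (Fintype.card κ * Fintype.card μ)) * √(2 * (Fintype.card κ * Fintype.card ν)) := by
  rw [← Real.sqrt_mul (by positivity)]
  refine Real.le_sqrt_of_sq_le ?_
  exact (l2_opNorm_mul_l2_opNorm_sq_le_of_abs_mul_le h.abs_schurComplement_mul_inv_le).trans_eq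
    (by ring)

end IsLocalMaxVol

end LocalMaxVol

section SchurComplement

variable {κ μ ν : Type*} [Fintype κ] [DecidableEq κ]

lemma fromBlocks_sub_fromBlocks_eq_schurComplement {R : Type*} [CommRing R] (A : Matrix κ κ R)
    (B : Matrix κ ν R) (C : Matrix μ κ R) (D : Matrix μ ν R) :
    fromBlocks A B C D - fromBlocks A B C (C * A⁻¹ * B) =
      fromBlocks 0 0 0 (schurComplement A B C D) := by
  ext (i | i) (j | j) <;> simp [schurComplement]

lemma rank_fromBlocks_mul_inv_mul_le {K : Type*} [Field K] [Fintype ν] {A : Matrix κ κ K}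
    (hA : IsUnit A.det) (B : Matrix κ ν K) (C : Matrix μ κ K) :
    (fromBlocks A B C (C * A⁻¹ * B)).rank ≤ Fintype.card κ := by
  have hfactor : fromBlocks A B C (C * A⁻¹ * B) = fromRows 1 (C * A⁻¹) * fromCols A B := by
    rw [fromRows_mul_fromCols, Matrix.one_mul, Matrix.one_mul,
      nonsing_inv_mul_cancel_right _ _ hA]
  rw [hfactor]
  exact (rank_mul_le_right _ _).trans (rank_le_card_height _)

variable [Fintype μ] [DecidableEq μ] [Fintype ν] [DecidableEq ν]

lemma fromBlocks_mul_fromBlocks_mul_fromBlocks_eq_diagonal {R : Type*} [CommRing R]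
    {A : Matrix κ κ R} (hA : IsUnit A.det) (B : Matrix κ ν R) (C : Matrix μ κ R)
    (D : Matrix μ ν R) (s t : R) :
    fromBlocks (s • (1 : Matrix κ κ R)) 0 (-(C * A⁻¹)) (1 : Matrix μ μ R) *
          fromBlocks A B C D *
        fromBlocks (t • (1 : Matrix κ κ R)) (-(A⁻¹ * B)) 0 (1 : Matrix ν ν R) =
      fromBlocks ((s * t) • A) 0 0 (schurComplement A B C D) := by
  simp [fromBlocks_multiply, schurComplement, nonsing_inv_mul_cancel_right _ _ hA,
    mul_nonsing_inv_cancel_left _ _ hA, smul_smul, mul_comm t, sub_eq_neg_add]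

variable {A : Matrix κ κ ℝ} {B : Matrix κ ν ℝ} {C : Matrix μ κ ℝ} {D : Matrix μ ν ℝ}

lemma IsLocalMaxVol.sval_schurComplement_mul_norm_le
    (h : IsLocalMaxVol (fromBlocks A B C D) Sum.inl Sum.inl) {j : ℕ} (hj : 0 < j)
    (x : EuclideanSpace ℝ κ) :
    sval (schurComplement A B C D) j * ‖x‖ ≤
      ‖toEuclideanLin ((√(2 * (Fintype.card κ * Fintype.card μ)) *
        √(2 * (Fintype.card κ * Fintype.card ν))) • A) x‖ := by
  set β := √(2 * (Fintype.card κ * Fintype.card μ)) * √(2 * (Fintype.card κ * Fintype.card ν))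
  have hβ0 : 0 ≤ β := by positivity
  calc sval (schurComplement A B C D) j * ‖x‖
      ≤ ‖schurComplement A B C D‖ * (‖A⁻¹‖ * ‖toEuclideanLin A x‖) := by
        gcongr
        exacts [sval_le_norm _ hj, norm_le_norm_inv_mul h.isUnit_det x]
    _ = ‖schurComplement A B C D‖ * ‖A⁻¹‖ * ‖toEuclideanLin A x‖ := by rw [mul_assoc]
    _ ≤ β * ‖toEuclideanLin A x‖ := by
        gcongr
        exact h.norm_schurComplement_mul_norm_inv_le
    _ = ‖toEuclideanLin (β • A) x‖ := by
        rw [map_smul, LinearMap.smul_apply, norm_smul, Real.norm_of_nonneg hβ0]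

lemma l2_opNorm_fromBlocks_lower_le {P : Matrix μ κ ℝ} {a : ℝ} (hP : ‖P‖ ^ 2 ≤ a) :
    ‖fromBlocks (√(2 * a) • (1 : Matrix κ κ ℝ)) 0 (-P) (1 : Matrix μ μ ℝ)‖ ≤ √(1 + 3 * a) := by
  have ha : 0 ≤ a := (sq_nonneg _).trans hP
  refine (l2_opNorm_fromBlocks_le _ _ _ _).trans (Real.sqrt_le_sqrt ?_)
  have hs := l2_opNorm_smul_one_sq_le (n := κ) √(2 * a)
  have h1 : ‖(1 : Matrix μ μ ℝ)‖ ^ 2 ≤ 1 := pow_le_one₀ (norm_nonneg _) l2_opNorm_one_le_one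
  rw [Real.sq_sqrt (by positivity)] at hs
  rw [norm_zero, norm_neg]
  linarith

lemma l2_opNorm_fromBlocks_upper_le {Q : Matrix κ ν ℝ} {a : ℝ} (hQ : ‖Q‖ ^ 2 ≤ a) :
    ‖fromBlocks (√(2 * a) • (1 : Matrix κ κ ℝ)) (-Q) 0 (1 : Matrix ν ν ℝ)‖ ≤ √(1 + 3 * a) := by
  have ha : 0 ≤ a := (sq_nonneg _).trans hQ
  refine (l2_opNorm_fromBlocks_le _ _ _ _).trans (Real.sqrt_le_sqrt ?_)
  have hs := l2_opNorm_smul_one_sq_le (n := κ) √(2 * a)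
  have h1 : ‖(1 : Matrix ν ν ℝ)‖ ^ 2 ≤ 1 := pow_le_one₀ (norm_nonneg _) l2_opNorm_one_le_one
  rw [Real.sq_sqrt (by positivity)] at hs
  rw [norm_zero, norm_neg]
  linarith

end SchurComplement

section Approximation

variable {κ μ ν : Type*} [Fintype κ] [DecidableEq κ] [Fintype μ] [DecidableEq μ] [Fintype ν]
  [DecidableEq ν]

lemma IsLocalMaxVol.sval_schurComplement_le {A : Matrix κ κ ℝ} {B : Matrix κ ν ℝ}
    {C : Matrix μ κ ℝ} {D : Matrix μ ν ℝ}
    (h : IsLocalMaxVol (fromBlocks A B C D) Sum.inl Sum.inl) {j : ℕ} (hj : 0 < j) :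
    sval (schurComplement A B C D) j ≤
      √(1 + 3 * (Fintype.card κ * Fintype.card μ)) *
          √(1 + 3 * (Fintype.card κ * Fintype.card ν)) *
        sval (fromBlocks A B C D) (Fintype.card κ + j) := by
  have hLAU := fromBlocks_mul_fromBlocks_mul_fromBlocks_eq_diagonal h.isUnit_det B C D
    √(2 * (Fintype.card κ * Fintype.card μ)) √(2 * (Fintype.card κ * Fintype.card ν))
  set L := fromBlocks (√(2 * (Fintype.card κ * Fintype.card μ)) • (1 : Matrix κ κ ℝ)) 0
    (-(C * A⁻¹)) (1 : Matrix μ μ ℝ)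
  set U := fromBlocks (√(2 * (Fintype.card κ * Fintype.card ν)) • (1 : Matrix κ κ ℝ))
    (-(A⁻¹ * B)) 0 (1 : Matrix ν ν ℝ)
  have hL : ‖L‖ ≤ √(1 + 3 * (Fintype.card κ * Fintype.card μ)) :=
    l2_opNorm_fromBlocks_lower_le h.norm_mul_inv_sq_le
  have hU : ‖U‖ ≤ √(1 + 3 * (Fintype.card κ * Fintype.card ν)) :=
    l2_opNorm_fromBlocks_upper_le h.norm_inv_mul_sq_le
  have hσ := sval_nonneg (fromBlocks A B C D) (Fintype.card κ + j)
  calc sval (schurComplement A B C D) j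
      ≤ sval (L * fromBlocks A B C D * U) (Fintype.card κ + j) := by
        rw [hLAU]
        exact sval_le_sval_fromBlocks_diagonal hj (h.sval_schurComplement_mul_norm_le hj)
    _ ≤ ‖L‖ * sval (fromBlocks A B C D) (Fintype.card κ + j) * ‖U‖ :=
        sval_mul_mul_le _ _ _ (by positivity)
    _ = ‖L‖ * ‖U‖ * sval (fromBlocks A B C D) (Fintype.card κ + j) := mul_right_comm _ _ _
    _ ≤ _ := by gcongr

lemma sqrt_mul_sqrt_le_one_add_five_mul (k m n : ℕ) :
    √(1 + 3 * (k * m)) * √(1 + 3 * (k * n)) ≤ 1 + 5 * k * √(((k : ℝ) + m) * (k + n)) := by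
  refine le_of_sq_le_sq ?_ (by positivity)
  set r := √(((k : ℝ) + m) * (k + n))
  have hr : r ^ 2 = (k + m) * (k + n) := Real.sq_sqrt (by positivity)
  have hkr : 0 ≤ k * r := by positivity
  have hk : (k : ℝ) ≤ (k : ℝ) ^ 3 := by exact_mod_cast Nat.le_self_pow (by norm_num) k
  have hkmn : (k : ℝ) * (m + n) ≤ (k : ℝ) ^ 3 * (m + n) := by gcongr
  have hkmn0 : 0 ≤ (k : ℝ) * (m + n) := by positivity
  have hk4 : 0 ≤ (k : ℝ) ^ 4 := by positivity
  have hk2mn : 0 ≤ (k : ℝ) ^ 2 * (m * n) := by positivity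
  calc (√(1 + 3 * (k * m)) * √(1 + 3 * (k * n))) ^ 2
      = 1 + 3 * ((k : ℝ) * (m + n)) + 9 * ((k : ℝ) ^ 2 * (m * n)) := by
        rw [mul_pow, Real.sq_sqrt (by positivity), Real.sq_sqrt (by positivity)]
        ring
    _ ≤ 1 + 25 * ((k : ℝ) ^ 4 + (k : ℝ) ^ 3 * (m + n) + (k : ℝ) ^ 2 * (m * n)) := by linarith
    _ = 1 + 25 * ((k : ℝ) ^ 2 * r ^ 2) := by
        rw [hr]
        ring
    _ ≤ (1 + 5 * k * r) ^ 2 := by linarith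

theorem statement_2_general {A11 : Matrix κ κ ℝ} {A12 : Matrix κ ν ℝ} {A21 : Matrix μ κ ℝ}
    {A22 : Matrix μ ν ℝ} (h : IsLocalMaxVol (fromBlocks A11 A12 A21 A22) Sum.inl Sum.inl) {j : ℕ}
    (hj : 0 < j) :
    sval (fromBlocks A11 A12 A21 A22) (Fintype.card κ + j) ≤
        sval (fromBlocks A11 A12 A21 A22 - fromBlocks A11 A12 A21 (A21 * A11⁻¹ * A12)) j ∧
      sval (fromBlocks A11 A12 A21 A22 - fromBlocks A11 A12 A21 (A21 * A11⁻¹ * A12)) j ≤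
        (1 + 5 * Fintype.card κ * √((Fintype.card κ + Fintype.card μ) *
            (Fintype.card κ + Fintype.card ν))) *
          sval (fromBlocks A11 A12 A21 A22) (Fintype.card κ + j) := by
  refine ⟨sval_add_le_sval_sub _ (rank_fromBlocks_mul_inv_mul_le h.isUnit_det A12 A21) hj, ?_⟩
  rw [fromBlocks_sub_fromBlocks_eq_schurComplement]
  refine ((sval_fromBlocks_zero_le _ hj).trans (h.sval_schurComplement_le hj)).trans ?_
  have hσ := sval_nonneg (fromBlocks A11 A12 A21 A22) (Fintype.card κ + j)
  gcongr
  exact sqrt_mul_sqrt_le_one_add_five_mul _ _ _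

end Approximation

theorem statement_2 {k m' n' : ℕ}
    (A11 : Matrix (Fin k) (Fin k) ℝ) (A12 : Matrix (Fin k) (Fin n') ℝ)
    (A21 : Matrix (Fin m') (Fin k) ℝ) (A22 : Matrix (Fin m') (Fin n') ℝ)
    (hinv : IsUnit A11.det)
    (hpos : 0 < vol A11)
    (hmax : ∀ (r : Fin k → Fin k ⊕ Fin m') (c : Fin k → Fin k ⊕ Fin n'),
      DiffOne Sum.inl r → DiffOne Sum.inl c →
      vol ((Matrix.fromBlocks A11 A12 A21 A22).submatrix r c) ≤ vol A11) :
    ∀ j : ℕ, 1 ≤ j → j ≤ min (k + m') (k + n') - k →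
      sval (Matrix.fromBlocks A11 A12 A21 A22) (k + j) ≤
        sval (Matrix.fromBlocks A11 A12 A21 A22
              - Matrix.fromBlocks A11 A12 A21 (A21 * A11⁻¹ * A12)) j ∧
      sval (Matrix.fromBlocks A11 A12 A21 A22
              - Matrix.fromBlocks A11 A12 A21 (A21 * A11⁻¹ * A12)) j ≤
        (1 + 5 * k * Real.sqrt ((k + m') * (k + n'))) *
          sval (Matrix.fromBlocks A11 A12 A21 A22) (k + j) := by
  intro j hj _
  have h : IsLocalMaxVol (fromBlocks A11 A12 A21 A22) Sum.inl Sum.inl := ⟨hpos, hmax⟩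
  simpa only [Fintype.card_fin] using statement_2_general h hj
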